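/- Let k ≥ 1 be a real number, let a ∈ {0,1}, let X > 0, and let d₁ be a real number with 0 < d₁ < (k+a)/2. Then the function t ↦ Γ(d₁+it)·Γ((k+a)/2 − d₁ − it)/Γ((1+a−k)/2 + d₁ + it) · X^{−(d₁+it)} is integrable on ℝ and (1/(2π)) ∫_{−∞}^{∞} Γ(d₁+it)·Γ((k+a)/2 − d₁ − it)/Γ((1+a−k)/2 + d₁ + it) · X^{−(d₁+it)} dt = (Γ((k+a)/2)/Γ(a + 1/2)) · X^{−(k+a)/2} · ₁F₁((k+a)/2; a + 1/2; −1/X). -/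

import Mathlib

open Complex

/-- The confluent hypergeometric series `₁F₁(α; β; z) = ∑_{j≥0} (α)_j/(β)_j · z^j/j!`,
where `(c)_j` is the rising factorial. -/
noncomputable def oneF1 (α β z : ℂ) : ℂ :=
  ∑' j : ℕ, ((ascPochhammer ℂ j).eval α / (ascPochhammer ℂ j).eval β) * z ^ j /
    (j.factorial : ℂ)

/-! Write `𝐌(α; β; z) = ₁F₁(α; β; z) / Γ(β)`, which is `regularizedHGFun {α} {β} z`. The
substitution `s ↦ α - s` reduces the claim to the inverse Mellin transform
`Γ(s) Γ(α - s) / Γ(β - s) ↦ Γ(α) 𝐌(α; β; -x)` on the line `re s = σ`, `0 < σ < re α`.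

If `re α < re β`, then `Γ(α - s) / Γ(β - s)` is a beta integral, so the kernel is `Γ` times the
Mellin transform at `1 - s` of a beta density. As the inverse Mellin transform of `Γ` is `exp (-x)`,
Fubini turns the integral into Euler's representation of `𝐌`. In general, `Γ(s + 1) = s Γ(s)`
expresses the kernel for `(α, β)` through those for `(α, β + 1)` and `(α + 1, β + 2)` in the same
way as the contiguous relation `𝐌(α; β; z) = β 𝐌(α; β + 1; z) + α z 𝐌(α + 1; β + 2; z)` does for
`𝐌`, and both pairs have a smaller `re α - re β`.
-/

open MeasureTheory Set
open scoped Nat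

section MellinInverse

variable {E : Type*} [NormedAddCommGroup E] {f g : ℂ → E} {σ x : ℝ}

lemma verticalIntegrable_comp_add_ofReal (a : ℝ) (hf : VerticalIntegrable f (σ + a)) :
    VerticalIntegrable (fun s => f (s + a)) σ := by
  refine hf.congr (.of_forall fun y => congrArg f ?_)
  push_cast
  ring

lemma verticalIntegrable_comp_const_sub (a : ℂ) (hf : VerticalIntegrable f (a.re - σ)) :
    VerticalIntegrable (fun s => f (a - s)) σ := by
  refine (Integrable.comp_sub_left hf a.im).congr (.of_forall fun y => congrArg f ?_)
  simp [Complex.ext_iff]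

variable [NormedSpace ℂ E]

lemma verticalIntegrable_const_smul (c : ℂ) (hf : VerticalIntegrable f σ) :
    VerticalIntegrable (fun s => c • f s) σ :=
  Integrable.smul c hf

lemma mellinInv_congr (h : ∀ y : ℝ, f (σ + y * I) = g (σ + y * I)) (x : ℝ) :
    mellinInv σ f x = mellinInv σ g x := by
  simp only [mellinInv, h]

lemma integrable_cpow_smul_of_verticalIntegrable (hf : VerticalIntegrable f σ) (hx : 0 < x) :
    Integrable fun y : ℝ => (x : ℂ) ^ (-(σ + y * I)) • f (σ + y * I) := by
  have hx₀ : (x : ℂ) ≠ 0 := ofReal_ne_zero.2 hx.ne'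
  refine Integrable.bdd_smul hf (x ^ (-σ))
    (Continuous.const_cpow (by fun_prop) (.inl hx₀)).aestronglyMeasurable (.of_forall fun y => ?_)
  simp [norm_cpow_eq_rpow_re_of_pos hx]

lemma mellinInv_sub (hf : VerticalIntegrable f σ) (hg : VerticalIntegrable g σ) (hx : 0 < x) :
    mellinInv σ (fun s => f s - g s) x = mellinInv σ f x - mellinInv σ g x := by
  simp only [mellinInv, smul_sub]
  rw [integral_sub (integrable_cpow_smul_of_verticalIntegrable hf hx)
    (integrable_cpow_smul_of_verticalIntegrable hg hx), smul_sub]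

lemma mellinInv_const_smul (c : ℂ) (f : ℂ → E) (σ x : ℝ) :
    mellinInv σ (fun s => c • f s) x = c • mellinInv σ f x := by
  simp only [mellinInv, smul_comm _ c, integral_smul]

lemma mellinInv_comp_add_ofReal (f : ℂ → E) (σ a : ℝ) (hx : 0 < x) :
    mellinInv σ (fun s => f (s + a)) x = (x : ℂ) ^ (a : ℂ) • mellinInv (σ + a) f x := by
  have hx₀ : (x : ℂ) ≠ 0 := ofReal_ne_zero.2 hx.ne'
  rw [mellinInv, mellinInv, smul_comm ((x : ℂ) ^ _), ← integral_smul ((x : ℂ) ^ _)]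
  congr 2 with y
  rw [smul_smul, ← cpow_add _ _ hx₀]
  push_cast
  ring_nf

lemma mellinInv_comp_const_sub (f : ℂ → E) (σ : ℝ) (a : ℂ) (hx : 0 < x) :
    mellinInv σ (fun s => f (a - s)) x = (x : ℂ) ^ (-a) • mellinInv (a.re - σ) f x⁻¹ := by
  have hx₀ : (x : ℂ) ≠ 0 := ofReal_ne_zero.2 hx.ne'
  rw [mellinInv, mellinInv, smul_comm ((x : ℂ) ^ _), ← integral_smul ((x : ℂ) ^ _),
    ← integral_sub_left_eq_self (fun y : ℝ => (x : ℂ) ^ (-a) •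
      ((x⁻¹ : ℝ) : ℂ) ^ (-((a.re - σ : ℝ) + y * I)) • f ((a.re - σ : ℝ) + y * I)) volume a.im]
  congr 2 with y
  have hy : ((a.re - σ : ℝ) : ℂ) + ((a.im - y : ℝ) : ℂ) * I = a - (σ + y * I) := by
    simp [Complex.ext_iff]
  rw [hy, ofReal_inv, inv_cpow _ _ (by simp [arg_ofReal_of_nonneg hx.le, Real.pi_ne_zero.symm]),
    cpow_neg _ (a - _), inv_inv, smul_smul, ← cpow_add _ _ hx₀]
  ring_nf

variable {F : ℂ → ℂ} {ψ : ℝ → E}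

lemma integrable_prod_cpow_smul (hF : VerticalIntegrable F σ)
    (hψ : MellinConvergent ψ (1 - σ)) :
    Integrable (fun p : ℝ × ℝ => F (σ + p.1 * I) • (p.2 : ℂ) ^ (-(σ + p.1 * I)) • ψ p.2)
      (volume.prod (volume.restrict (Ioi 0))) := by
  have hpos : ∀ᵐ p : ℝ × ℝ ∂volume.prod (volume.restrict (Ioi 0)), 0 < p.2 :=
    Measure.quasiMeasurePreserving_snd.ae (ae_restrict_mem measurableSet_Ioi)
  have hbdd : ∀ᵐ p : ℝ × ℝ ∂volume.prod (volume.restrict (Ioi 0)),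
      ‖(p.2 : ℂ) ^ (-(p.1 * I))‖ ≤ 1 := by
    filter_upwards [hpos] with p hp
    simp [norm_cpow_eq_rpow_re_of_pos hp]
  refine ((Integrable.smul_prod hF hψ).bdd_smul 1
    (by fun_prop : Measurable fun p : ℝ × ℝ => (p.2 : ℂ) ^ (-(p.1 * I))).aestronglyMeasurable
    hbdd).congr ?_
  filter_upwards [hpos] with p hp
  have hp₀ : (p.2 : ℂ) ≠ 0 := ofReal_ne_zero.2 hp.ne'
  simp only [Pi.smul_apply']
  rw [smul_comm, smul_smul ((p.2 : ℂ) ^ _), ← cpow_add _ _ hp₀]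
  ring_nf

lemma mellin_one_sub (ψ : ℝ → E) (s : ℂ) :
    mellin ψ (1 - s) = ∫ u in Ioi (0 : ℝ), (u : ℂ) ^ (-s) • ψ u := by
  simp [mellin]

lemma verticalIntegrable_smul_mellin_one_sub (hF : VerticalIntegrable F σ)
    (hψ : MellinConvergent ψ (1 - σ)) :
    VerticalIntegrable (fun s => F s • mellin ψ (1 - s)) σ := by
  refine (integrable_prod_cpow_smul hF hψ).integral_prod_left.congr (.of_forall fun y => ?_)
  simp only [mellin_one_sub, integral_smul]

lemma mellinInv_smul_mellin_one_sub [CompleteSpace E] (hF : VerticalIntegrable F σ)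
    (hψ : MellinConvergent ψ (1 - σ)) (hx : 0 < x) :
    mellinInv σ (fun s => F s • mellin ψ (1 - s)) x =
      ∫ u in Ioi 0, mellinInv σ F (x * u) • ψ u := by
  have hint := integrable_prod_cpow_smul
    (F := fun s => (x : ℂ) ^ (-s) • F s) (integrable_cpow_smul_of_verticalIntegrable hF hx) hψ
  calc mellinInv σ (fun s => F s • mellin ψ (1 - s)) x
      = (1 / (2 * Real.pi)) • ∫ y : ℝ, ∫ u in Ioi (0 : ℝ),
          ((x : ℂ) ^ (-(σ + y * I)) • F (σ + y * I)) • (u : ℂ) ^ (-(σ + y * I)) • ψ u := by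
        simp only [mellinInv, mellin_one_sub, integral_smul, smul_assoc]
    _ = (1 / (2 * Real.pi)) • ∫ u in Ioi (0 : ℝ), ∫ y : ℝ,
          ((x : ℂ) ^ (-(σ + y * I)) • F (σ + y * I)) • (u : ℂ) ^ (-(σ + y * I)) • ψ u := by
        rw [integral_integral_swap hint]
    _ = ∫ u in Ioi 0, mellinInv σ F (x * u) • ψ u := by
        rw [← integral_smul]
        refine setIntegral_congr_fun measurableSet_Ioi fun u hu => ?_
        simp only [mellinInv, smul_assoc, ← integral_smul_const]
        congr! 3 with y
        rw [ofReal_mul, mul_cpow_ofReal_nonneg hx.le (le_of_lt hu)]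
        simp only [smul_smul]
        ring_nf

end MellinInverse

section KummerFunction

lemma hasSum_regularizedHGFun_singleton (α β z : ℂ) :
    HasSum (fun n : ℕ => (ascPochhammer ℂ n).eval α / (n ! * Gamma (β + n)) * z ^ n)
      (regularizedHGFun {α} {β} z) := by
  have hradius : (regularizedHGFunSeries {α} {β}).radius = ⊤ :=
    radius_regularizedHGFunSeries_eq_top (by simp)
  have h := (regularizedHGFunSeries {α} {β}).hasSum (x := z) (by simp [hradius])
  simpa [regularizedHGFunSeries, regularizedHGFun, regularizedHGFunCoeff, mul_comm] using h

lemma regularizedHGFun_singleton_eq_add (α β z : ℂ) :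
    regularizedHGFun {α} {β} z = β * regularizedHGFun {α} {β + 1} z +
      α * z * regularizedHGFun {α + 1} {β + 2} z := by
  set c : ℕ → ℂ := fun n => (ascPochhammer ℂ n).eval α / (n ! * Gamma (β + 1 + n)) * z ^ n
  have hshift : HasSum (fun n : ℕ => n * c n) (α * z * regularizedHGFun {α + 1} {β + 2} z) := by
    refine (hasSum_nat_add_iff' 1).1 ?_
    simp only [Finset.range_one, Finset.sum_singleton, Nat.cast_zero, zero_mul, sub_zero]
    refine ((hasSum_regularizedHGFun_singleton (α + 1) (β + 2) z).mul_left
      (α * z)).congr_fun fun n => ?_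
    have hn : (n : ℂ) + 1 ≠ 0 := Nat.cast_add_one_ne_zero n
    simp only [c, ascPochhammer_succ_left, Nat.factorial_succ, Polynomial.eval_mul,
      Polynomial.eval_X, Polynomial.eval_comp, Polynomial.eval_add, Polynomial.eval_one]
    push_cast
    rw [show β + 1 + (n + 1) = β + 2 + n by ring]
    field_simp
    ring
  have hsum := ((hasSum_regularizedHGFun_singleton α (β + 1) z).mul_left β).add hshift
  refine (hasSum_regularizedHGFun_singleton α β z).unique (hsum.congr_fun fun n => ?_)
  simp only [c, div_eq_mul_inv, mul_inv]
  rw [one_div_Gamma_eq_self_mul_one_div_Gamma_add_one (β + n), add_right_comm]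
  ring

lemma oneF1_eq_Gamma_mul_regularizedHGFun {β : ℂ} (hβ : ∀ n : ℕ, β ≠ -n) (α z : ℂ) :
    oneF1 α β z = Gamma β * regularizedHGFun {α} {β} z := by
  refine (((hasSum_regularizedHGFun_singleton α β z).mul_left (Gamma β)).congr_fun
    fun n => ?_).tsum_eq
  rw [← Gamma_add_nat_div_Gamma_eq β hβ]
  have hΓ := Gamma_ne_zero hβ
  field_simp

end KummerFunction

section GammaLine

variable {σ x : ℝ}

lemma ne_neg_natCast_of_re_pos {s : ℂ} (hs : 0 < s.re) (n : ℕ) : s ≠ -n := by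
  rintro rfl
  rw [neg_re, natCast_re] at hs
  linarith [n.cast_nonneg (α := ℝ)]

lemma Gamma_eq_mellin_exp_neg {s : ℂ} (hs : 0 < s.re) :
    Gamma s = mellin (fun u : ℝ => (Real.exp (-u) : ℂ)) s := by
  rw [Gamma_eq_integral hs, GammaIntegral_eq_mellin]

lemma norm_Gamma_le_Gamma_re {s : ℂ} (hs : 0 < s.re) : ‖Gamma s‖ ≤ Real.Gamma s.re := by
  rw [Gamma_eq_integral hs, Real.Gamma_eq_integral hs, GammaIntegral]
  refine (norm_integral_le_integral_norm _).trans_eq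
    (setIntegral_congr_fun measurableSet_Ioi fun u (hu : 0 < u) => ?_)
  simp [norm_cpow_eq_rpow_re_of_pos hu, norm_exp]

lemma continuousAt_Gamma_of_re_pos {s : ℂ} (hs : 0 < s.re) : ContinuousAt Gamma s :=
  (differentiableAt_Gamma s (ne_neg_natCast_of_re_pos hs)).continuousAt

lemma norm_Gamma_le_div_normSq {s : ℂ} (hs : 0 < s.re) :
    ‖Gamma s‖ ≤ Real.Gamma (s.re + 2) / normSq s := by
  have hs₀ : s ≠ 0 := by rintro rfl; simp at hs
  have hs₁ : s + 1 ≠ 0 := fun h => by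
    have := congrArg re h
    simp only [add_re, one_re, zero_re] at this
    linarith
  have hle : ‖s‖ ≤ ‖s + 1‖ := by
    rw [← sq_le_sq₀ (norm_nonneg _) (norm_nonneg _), ← normSq_eq_norm_sq, ← normSq_eq_norm_sq,
      normSq_apply, normSq_apply]
    simp only [add_re, one_re, add_im, one_im]
    nlinarith
  rw [le_div_iff₀ (normSq_pos.2 hs₀), normSq_eq_norm_sq]
  calc ‖Gamma s‖ * ‖s‖ ^ 2 = ‖Gamma s‖ * ‖s‖ * ‖s‖ := by ring
    _ ≤ ‖Gamma s‖ * ‖s‖ * ‖s + 1‖ := by gcongr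
    _ = ‖Gamma (s + 1 + 1)‖ := by
      rw [Gamma_add_one _ hs₁, Gamma_add_one _ hs₀, norm_mul, norm_mul]
      ring
    _ ≤ Real.Gamma (s + 1 + 1).re :=
      norm_Gamma_le_Gamma_re (by simp only [add_re, one_re]; linarith)
    _ = Real.Gamma (s.re + 2) := by
      simp only [add_re, one_re]
      ring_nf

lemma verticalIntegrable_Gamma (hσ : 0 < σ) : VerticalIntegrable Gamma σ := by
  have hre : ∀ y : ℝ, 0 < ((σ : ℂ) + y * I).re := by simpa using hσ
  have hcont : Continuous fun y : ℝ => Gamma (σ + y * I) := continuous_iff_continuousAt.2 fun y =>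
    (continuousAt_Gamma_of_re_pos (hre y)).comp (f := fun y : ℝ => (σ : ℂ) + y * I) (by fun_prop)
  refine ((integrable_inv_one_add_sq.comp_div hσ.ne').const_mul (Real.Gamma (σ + 2) / σ ^ 2)).mono'
    hcont.aestronglyMeasurable (.of_forall fun y => ?_)
  refine (norm_Gamma_le_div_normSq (hre y)).trans_eq ?_
  rw [normSq_add_mul_I, add_re, ofReal_re, re_ofReal_mul, I_re, mul_zero, add_zero]
  field_simp

lemma mellinInv_Gamma (hσ : 0 < σ) (hx : 0 < x) : mellinInv σ Gamma x = exp (-x) := by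
  have hmellin : ∀ y : ℝ, Gamma (σ + y * I) =
      mellin (fun u : ℝ => (Real.exp (-u) : ℂ)) (σ + y * I) :=
    fun y => Gamma_eq_mellin_exp_neg (by simpa using hσ)
  rw [mellinInv_congr hmellin, mellinInv_mellin_eq σ _ hx]
  · push_cast
    rfl
  · simpa only [MellinConvergent, smul_eq_mul, mul_comm] using
      GammaIntegral_convergent (s := σ) (by simpa using hσ)
  · exact (verticalIntegrable_Gamma hσ).congr (.of_forall hmellin)
  · fun_prop

end GammaLine

section BetaDensity

variable {α γ s : ℂ}

/-- The unnormalised density `u ^ (α - 1) * (1 - u) ^ (γ - 1)` of the beta distribution with complex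
parameters, extended by zero from `(0, 1)` to the real line so that it has a Mellin transform. -/
noncomputable def betaDensity (α γ : ℂ) : ℝ → ℂ :=
  (Ioo 0 1).indicator fun u => (u : ℂ) ^ (α - 1) * (1 - u : ℂ) ^ (γ - 1)

lemma integrable_betaDensity (hα : 0 < α.re) (hγ : 0 < γ.re) : Integrable (betaDensity α γ) :=
  (integrable_indicator_iff measurableSet_Ioo).2 <|
    (intervalIntegrable_iff_integrableOn_Ioo_of_le zero_le_one).1 (betaIntegral_convergent hα hγ)

lemma setIntegral_betaDensity (α γ : ℂ) :
    ∫ u in Ioi 0, betaDensity α γ u = betaIntegral α γ := by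
  rw [betaDensity, setIntegral_indicator measurableSet_Ioo, inter_eq_right.2 Ioo_subset_Ioi_self,
    betaIntegral, intervalIntegral.integral_of_le zero_le_one, integral_Ioc_eq_integral_Ioo]

lemma cpow_mul_betaDensity {u : ℝ} (hu : 0 < u) (α γ s : ℂ) :
    (u : ℂ) ^ s * betaDensity α γ u = betaDensity (α + s) γ u := by
  rw [betaDensity, betaDensity, indicator_apply, indicator_apply, mul_ite, mul_zero, ← mul_assoc,
    ← cpow_add _ _ (ofReal_ne_zero.2 hu.ne')]
  ring_nf

lemma mellinConvergent_betaDensity (hs : 0 < (α + (s - 1)).re) (hγ : 0 < γ.re) :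
    MellinConvergent (betaDensity α γ) s :=
  (integrable_betaDensity hs hγ).integrableOn.congr_fun
    (fun _ hu => (cpow_mul_betaDensity hu α γ (s - 1)).symm) measurableSet_Ioi

lemma mellin_betaDensity (α γ s : ℂ) :
    mellin (betaDensity α γ) s = betaIntegral (α + (s - 1)) γ := by
  rw [← setIntegral_betaDensity]
  exact setIntegral_congr_fun measurableSet_Ioi fun u hu => cpow_mul_betaDensity hu α γ (s - 1)

lemma norm_pow_mul_betaDensity_le {u : ℝ} (hu : 0 < u) (α γ z : ℂ) (n : ℕ) :
    ‖(z * u) ^ n * betaDensity α γ u‖ ≤ ‖z‖ ^ n * ‖betaDensity α γ u‖ := by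
  by_cases hu₁ : u ∈ Ioo (0 : ℝ) 1
  · have hzu : ‖z * u‖ ≤ ‖z‖ := by
      rw [norm_mul, norm_real, Real.norm_of_nonneg hu.le]
      exact mul_le_of_le_one_right (norm_nonneg z) hu₁.2.le
    rw [norm_mul, norm_pow]
    gcongr
  · simp [betaDensity, hu₁]

lemma setIntegral_pow_mul_betaDensity (hα : 0 < α.re) (hγ : 0 < γ.re) (z : ℂ) (n : ℕ) :
    ∫ u in Ioi (0 : ℝ), (z * u) ^ n * betaDensity α γ u =
      Gamma α * Gamma γ * ((ascPochhammer ℂ n).eval α / Gamma (α + γ + n) * z ^ n) := by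
  have hΓα := Gamma_ne_zero_of_re_pos hα
  calc ∫ u in Ioi (0 : ℝ), (z * u) ^ n * betaDensity α γ u
      = ∫ u in Ioi (0 : ℝ), z ^ n * betaDensity (α + n) γ u := by
        refine setIntegral_congr_fun measurableSet_Ioi fun u hu => ?_
        simp only [mul_pow, ← cpow_mul_betaDensity hu, cpow_natCast, mul_assoc]
    _ = z ^ n * (Gamma (α + n) * Gamma γ / Gamma (α + n + γ)) := by
        rw [integral_const_mul, setIntegral_betaDensity,
          betaIntegral_eq_Gamma_mul_div _ _ (by simpa using by positivity) hγ]
    _ = Gamma α * Gamma γ * ((ascPochhammer ℂ n).eval α / Gamma (α + γ + n) * z ^ n) := by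
        rw [← Gamma_add_nat_div_Gamma_eq α (ne_neg_natCast_of_re_pos hα), add_right_comm]
        field_simp

lemma setIntegral_exp_mul_betaDensity (hα : 0 < α.re) (hγ : 0 < γ.re) (z : ℂ) :
    ∫ u in Ioi (0 : ℝ), exp (z * u) * betaDensity α γ u =
      Gamma α * Gamma γ * regularizedHGFun {α} {α + γ} z := by
  have hβ : Integrable (betaDensity α γ) (volume.restrict (Ioi 0)) :=
    (integrable_betaDensity hα hγ).restrict
  have hterms : HasSum
      (fun n : ℕ => ∫ u in Ioi (0 : ℝ), (n ! : ℂ)⁻¹ * ((z * u) ^ n * betaDensity α γ u))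
      (∫ u in Ioi (0 : ℝ), exp (z * u) * betaDensity α γ u) := by
    refine hasSum_integral_of_dominated_convergence
      (fun n u => ‖z‖ ^ n / n ! * ‖betaDensity α γ u‖) (fun n => ?_)
      (fun n => (ae_restrict_mem measurableSet_Ioi).mono fun u hu => ?_)
      (.of_forall fun u => (Real.summable_pow_div_factorial ‖z‖).mul_right _) ?_
      (.of_forall fun u => ?_)
    · exact ((by fun_prop : Continuous fun u : ℝ => (z * u) ^ n).aestronglyMeasurable.mul
        hβ.aestronglyMeasurable).const_mul _
    · rw [norm_mul, norm_inv, Complex.norm_natCast, div_eq_inv_mul, mul_assoc]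
      gcongr
      exact norm_pow_mul_betaDensity_le hu α γ z n
    · simpa only [tsum_mul_right] using hβ.norm.const_mul _
    · simpa only [exp_eq_exp_ℂ, div_eq_inv_mul, mul_assoc] using
        (NormedSpace.expSeries_div_hasSum_exp (z * u)).mul_right (betaDensity α γ u)
  refine hterms.unique (((hasSum_regularizedHGFun_singleton α (α + γ) z).mul_left
    (Gamma α * Gamma γ)).congr_fun fun n => ?_)
  rw [integral_const_mul, setIntegral_pow_mul_betaDensity hα hγ]
  ring

end BetaDensity

section BarnesKernel

variable {α β : ℂ} {σ x : ℝ}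

/-- The Barnes integrand `Γ(s) Γ(α - s) / Γ(β - s)`, which is, up to the factor `Γ(α)`, the Mellin
transform of the regularized Kummer function at `-x`. -/
noncomputable def barnesKernel (α β s : ℂ) : ℂ :=
  Gamma s * Gamma (α - s) / Gamma (β - s)

lemma barnesKernel_eq_sub {s : ℂ} (hs : s ≠ 0) (α β : ℂ) :
    barnesKernel α β s = β • barnesKernel α (β + 1) s - barnesKernel (α + 1) (β + 2) (s + 1) := by
  simp only [barnesKernel, div_eq_mul_inv, smul_eq_mul]
  rw [one_div_Gamma_eq_self_mul_one_div_Gamma_add_one (β - s), Gamma_add_one s hs]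
  ring_nf

lemma barnesKernel_line_eq_sub (hσ : σ ≠ 0) (α β : ℂ) (y : ℝ) :
    barnesKernel α β (σ + y * I) = β • barnesKernel α (β + 1) (σ + y * I) -
      barnesKernel (α + 1) (β + 2) (σ + y * I + (1 : ℝ)) := by
  rw [ofReal_one]
  exact barnesKernel_eq_sub (by simp [Complex.ext_iff, hσ]) α β

/-- Each application of `step` lowers the excess `re (α - β)` by one. -/
lemma induction_on_re_lt {P : ℂ → ℂ → Prop} (base : ∀ α β, α.re < β.re → P α β)
    (step : ∀ α β, P α (β + 1) → P (α + 1) (β + 2) → P α β) (α β : ℂ) : P α β := by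
  obtain ⟨n, hn⟩ := exists_nat_gt (α.re - β.re)
  induction n generalizing α β with
  | zero => exact base α β (by simpa using hn)
  | succ n ih =>
    push_cast at hn
    exact step α β (ih _ _ (by simp; linarith)) (ih _ _ (by simp; linarith))

lemma barnesKernel_eq_smul_mellin_betaDensity {s : ℂ} (hs : s.re < α.re) (hβ : α.re < β.re) :
    barnesKernel α β s =
      (Gamma (β - α))⁻¹ • (Gamma s • mellin (betaDensity α (β - α)) (1 - s)) := by
  have hγ : 0 < (β - α).re := by simpa using hβ
  have hαs : 0 < (α - s).re := by simpa using hs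
  have hΓ := Gamma_ne_zero_of_re_pos hγ
  rw [mellin_betaDensity, show α + (1 - s - 1) = α - s by ring,
    betaIntegral_eq_Gamma_mul_div _ _ hαs hγ, barnesKernel, smul_eq_mul, smul_eq_mul]
  field_simp
  ring_nf

lemma mellinConvergent_betaDensity_one_sub (hσ : σ < α.re) (hβ : α.re < β.re) :
    MellinConvergent (betaDensity α (β - α)) (1 - σ) :=
  mellinConvergent_betaDensity (by simpa using hσ) (by simpa using hβ)

lemma verticalIntegrable_barnesKernel (α β : ℂ) (hσ : 0 < σ) (hα : σ < α.re) :
    VerticalIntegrable (barnesKernel α β) σ := by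
  induction α, β using induction_on_re_lt generalizing σ with
  | base α β hβ =>
    have h := verticalIntegrable_const_smul (Gamma (β - α))⁻¹
      (verticalIntegrable_smul_mellin_one_sub (verticalIntegrable_Gamma hσ)
        (mellinConvergent_betaDensity_one_sub hα hβ))
    exact h.congr (.of_forall fun y =>
      (barnesKernel_eq_smul_mellin_betaDensity (by simpa using hα) hβ).symm)
  | step α β ih₁ ih₂ =>
    have h₁ := verticalIntegrable_const_smul β (ih₁ hσ hα)
    have h₂ := verticalIntegrable_comp_add_ofReal 1
      (ih₂ (σ := σ + 1) (by positivity) (by simpa using hα))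
    exact (h₁.sub h₂).congr (.of_forall fun y => (barnesKernel_line_eq_sub hσ.ne' α β y).symm)

lemma mellinInv_barnesKernel_of_re_lt (hσ : 0 < σ) (hα : σ < α.re) (hβ : α.re < β.re)
    (hx : 0 < x) :
    mellinInv σ (barnesKernel α β) x = Gamma α * regularizedHGFun {α} {β} (-x) := by
  have hγ : 0 < (β - α).re := by simpa using hβ
  have hΓ := Gamma_ne_zero_of_re_pos hγ
  calc mellinInv σ (barnesKernel α β) x
      = (Gamma (β - α))⁻¹ •
          mellinInv σ (fun s => Gamma s • mellin (betaDensity α (β - α)) (1 - s)) x := by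
        rw [← mellinInv_const_smul]
        exact mellinInv_congr
          (fun y => barnesKernel_eq_smul_mellin_betaDensity (by simpa using hα) hβ) x
    _ = (Gamma (β - α))⁻¹ • ∫ u in Ioi (0 : ℝ), exp (-x * u) * betaDensity α (β - α) u := by
        rw [mellinInv_smul_mellin_one_sub (verticalIntegrable_Gamma hσ)
          (mellinConvergent_betaDensity_one_sub hα hβ) hx]
        congr 1
        refine setIntegral_congr_fun measurableSet_Ioi fun u (hu : 0 < u) => ?_
        simp only [mellinInv_Gamma hσ (mul_pos hx hu), ofReal_mul, neg_mul, smul_eq_mul]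
    _ = Gamma α * regularizedHGFun {α} {β} (-x) := by
        rw [setIntegral_exp_mul_betaDensity (hσ.trans hα) hγ, add_sub_cancel, smul_eq_mul]
        field_simp

lemma mellinInv_barnesKernel_eq_sub (α β : ℂ) (hσ : 0 < σ) (hα : σ < α.re) (hx : 0 < x) :
    mellinInv σ (barnesKernel α β) x = β * mellinInv σ (barnesKernel α (β + 1)) x -
      x * mellinInv (σ + 1) (barnesKernel (α + 1) (β + 2)) x := by
  have h₁ := verticalIntegrable_const_smul β (verticalIntegrable_barnesKernel α (β + 1) hσ hα)
  have h₂ := verticalIntegrable_comp_add_ofReal 1 (verticalIntegrable_barnesKernel (α + 1) (β + 2)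
    (σ := σ + 1) (by positivity) (by simpa using hα))
  rw [mellinInv_congr (g := fun s => β • barnesKernel α (β + 1) s -
      barnesKernel (α + 1) (β + 2) (s + (1 : ℝ))) (barnesKernel_line_eq_sub hσ.ne' α β),
    mellinInv_sub h₁ h₂ hx, mellinInv_const_smul, mellinInv_comp_add_ofReal _ _ _ hx, ofReal_one,
    cpow_one, smul_eq_mul, smul_eq_mul]

theorem mellinInv_barnesKernel (α β : ℂ) (hσ : 0 < σ) (hα : σ < α.re) (hx : 0 < x) :
    mellinInv σ (barnesKernel α β) x = Gamma α * regularizedHGFun {α} {β} (-x) := by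
  induction α, β using induction_on_re_lt generalizing σ with
  | base α β hβ => exact mellinInv_barnesKernel_of_re_lt hσ hα hβ hx
  | step α β ih₁ ih₂ =>
    have hα₀ : α ≠ 0 := by
      rintro rfl
      exact (hσ.trans hα).ne rfl
    rw [mellinInv_barnesKernel_eq_sub α β hσ hα hx, ih₁ hσ hα,
      ih₂ (σ := σ + 1) (by positivity) (by simpa using hα), Gamma_add_one α hα₀,
      regularizedHGFun_singleton_eq_add α β]
    ring

end BarnesKernel

theorem barnes_integral_eq_oneF1_general {α β : ℂ} (hβ : ∀ n : ℕ, β ≠ -n) {X d : ℝ} (hX : 0 < X)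
    (hd : 0 < d) (hdα : d < α.re) :
    Integrable (fun t : ℝ => Gamma ((d : ℂ) + t * I) * Gamma (α - ((d : ℂ) + t * I)) /
      Gamma (β - α + ((d : ℂ) + t * I)) * (X : ℂ) ^ (-((d : ℂ) + t * I))) ∧
    (1 / (2 * Real.pi)) * ∫ t : ℝ, Gamma ((d : ℂ) + t * I) * Gamma (α - ((d : ℂ) + t * I)) /
      Gamma (β - α + ((d : ℂ) + t * I)) * (X : ℂ) ^ (-((d : ℂ) + t * I)) =
        Gamma α / Gamma β * (X : ℂ) ^ (-α) * oneF1 α β (-1 / X) := by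
  have hd₀ : 0 < α.re - d := sub_pos.2 hdα
  have hdα' : α.re - d < α.re := sub_lt_self _ hd
  have hkernel : ∀ s : ℂ, Gamma s * Gamma (α - s) / Gamma (β - α + s) * (X : ℂ) ^ (-s) =
      (X : ℂ) ^ (-s) • barnesKernel α β (α - s) := fun s => by
    rw [barnesKernel, sub_sub_cancel, smul_eq_mul]
    ring_nf
  simp only [hkernel]
  refine ⟨integrable_cpow_smul_of_verticalIntegrable (verticalIntegrable_comp_const_sub α
    (verticalIntegrable_barnesKernel α β hd₀ hdα')) hX, ?_⟩
  have hΓ := Gamma_ne_zero hβ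
  calc (1 / (2 * Real.pi)) * ∫ t : ℝ,
        (X : ℂ) ^ (-((d : ℂ) + t * I)) • barnesKernel α β (α - ((d : ℂ) + t * I))
      = mellinInv d (fun s => barnesKernel α β (α - s)) X := by
        rw [mellinInv, real_smul]
        push_cast
        rfl
    _ = (X : ℂ) ^ (-α) * (Gamma α * regularizedHGFun {α} {β} (-1 / X)) := by
        rw [mellinInv_comp_const_sub _ d α hX,
          mellinInv_barnesKernel α β hd₀ hdα' (inv_pos.2 hX), ofReal_inv, neg_div, one_div,
          smul_eq_mul]
    _ = Gamma α / Gamma β * (X : ℂ) ^ (-α) * oneF1 α β (-1 / X) := by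
        rw [oneF1_eq_Gamma_mul_regularizedHGFun hβ]
        field_simp

theorem barnes_integral_eq_oneF1 (k : ℝ) (hk : 1 ≤ k) (a : ℕ) (ha : a = 0 ∨ a = 1)
    (X : ℝ) (hX : 0 < X) (d₁ : ℝ) (hd₁ : 0 < d₁) (hd₁' : d₁ < (k + a) / 2) :
    MeasureTheory.Integrable (fun t : ℝ =>
      Complex.Gamma ((d₁ : ℂ) + t * I) *
        Complex.Gamma (((k : ℂ) + a) / 2 - ((d₁ : ℂ) + t * I)) /
        Complex.Gamma ((1 + (a : ℂ) - k) / 2 + ((d₁ : ℂ) + t * I)) *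
        (X : ℂ) ^ (-((d₁ : ℂ) + t * I))) ∧
    (1 / (2 * Real.pi)) * ∫ t : ℝ,
        Complex.Gamma ((d₁ : ℂ) + t * I) *
          Complex.Gamma (((k : ℂ) + a) / 2 - ((d₁ : ℂ) + t * I)) /
          Complex.Gamma ((1 + (a : ℂ) - k) / 2 + ((d₁ : ℂ) + t * I)) *
          (X : ℂ) ^ (-((d₁ : ℂ) + t * I)) =
      Complex.Gamma (((k : ℂ) + a) / 2) / Complex.Gamma ((a : ℂ) + 1 / 2) *
        (X : ℂ) ^ (-(((k : ℂ) + a) / 2)) *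
        oneF1 (((k : ℂ) + a) / 2) ((a : ℂ) + 1 / 2) (-1 / X) := by
  have hβ : 0 < ((a : ℂ) + 1 / 2).re := by
    simpa using add_pos_of_nonneg_of_pos a.cast_nonneg (inv_pos.2 two_pos)
  rw [show (1 + (a : ℂ) - k) / 2 = a + 1 / 2 - (k + a) / 2 by ring]
  exact barnes_integral_eq_oneF1_general (ne_neg_natCast_of_re_pos hβ) hX hd₁ (by simpa using hd₁')
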